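/- arXiv:2409.15433 — 3 statements merged into one kernel-verified Lean document; each statement's English description precedes it below -/
import Mathlib

section
/- Let A and B be n×n Hermitian complex matrices, and for a Hermitian matrix M let μ_1(M) ≤ μ_2(M) ≤ … ≤ μ_n(M) denote its eigenvalues in increasing order. Then for all indices i, j with 1 ≤ i, j ≤ n: (a) if i + j − 1 ≤ n, then μ_{i+j−1}(A+B) ≥ μ_i(A) + μ_j(B); and (b) if i + j − n ≥ 1, then μ_i(A) + μ_j(B) ≥ μ_{i+j−n}(A+B). -/
/-! The proof is the dimension count behind the Courant–Fischer principle. List an orthonormal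
eigenbasis of a Hermitian matrix `M` so that the eigenvalues increase. On the span of the
eigenvectors of index `≥ k`, of dimension `n - k` for `k` counted from `0`, the quadratic form
`x ↦ re ⟪x, M x⟫` is at least `μ_k ‖x‖²`; on the span of those of index `≤ k`, of dimension
`k + 1`, it is at most `μ_k ‖x‖²` (`exists_submodule_le_quadForm`,
`exists_submodule_quadForm_le`). In both halves of Weyl's inequality one selects such a subspace
for each of `A`, `B` and `A + B`, the dimensions adding up to `2 n + 1`. Three subspaces of an
`n`-dimensional space with that property share a nonzero vector (`exists_common_ne_zero`), and
comparing the three quadratic forms at this vector gives the inequality, as the form is additive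
in `M`. -/

/-- The eigenvalues of a Hermitian matrix, listed with multiplicity in increasing order. -/
noncomputable def sortedEigenvalues {n : ℕ} {A : Matrix (Fin n) (Fin n) ℂ}
    (hA : A.IsHermitian) : Fin n → ℝ :=
  hA.eigenvalues ∘ Tuple.sort hA.eigenvalues

/-- The real quadratic form `x ↦ re ⟪x, M x⟫` attached to a complex matrix `M`. -/
noncomputable def quadForm {n : ℕ} (M : Matrix (Fin n) (Fin n) ℂ)
    (x : EuclideanSpace ℂ (Fin n)) : ℝ :=
  (inner ℂ x (Matrix.toEuclideanLin M x)).re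

lemma quadForm_add {n : ℕ} (A B : Matrix (Fin n) (Fin n) ℂ) (x : EuclideanSpace ℂ (Fin n)) :
    quadForm (A + B) x = quadForm A x + quadForm B x := by
  simp [quadForm]

lemma sortedEigenvalues_monotone {n : ℕ} {M : Matrix (Fin n) (Fin n) ℂ} (hM : M.IsHermitian) :
    Monotone (sortedEigenvalues hM) :=
  Tuple.monotone_sort _

/-- An orthonormal eigenbasis of `M`, listed in the order of `sortedEigenvalues`. -/
noncomputable def sortedEigenbasis {n : ℕ} {M : Matrix (Fin n) (Fin n) ℂ} (hM : M.IsHermitian) :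
    OrthonormalBasis (Fin n) ℂ (EuclideanSpace ℂ (Fin n)) :=
  hM.eigenvectorBasis.reindex (Tuple.sort hM.eigenvalues).symm

lemma toEuclideanLin_sortedEigenbasis {n : ℕ} {M : Matrix (Fin n) (Fin n) ℂ}
    (hM : M.IsHermitian) (k : Fin n) :
    Matrix.toEuclideanLin M (sortedEigenbasis hM k) =
      (sortedEigenvalues hM k : ℂ) • sortedEigenbasis hM k := by
  ext l
  have h := congrFun (hM.mulVec_eigenvectorBasis (Tuple.sort hM.eigenvalues k)) l
  simpa [sortedEigenbasis, sortedEigenvalues, Matrix.toLpLin_apply] using h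

lemma inner_sortedEigenbasis_toEuclideanLin {n : ℕ} {M : Matrix (Fin n) (Fin n) ℂ}
    (hM : M.IsHermitian) (k : Fin n) (x : EuclideanSpace ℂ (Fin n)) :
    inner ℂ (sortedEigenbasis hM k) (Matrix.toEuclideanLin M x) =
      (sortedEigenvalues hM k : ℂ) * inner ℂ (sortedEigenbasis hM k) x := by
  have hsymm := Matrix.isSymmetric_toEuclideanLin_iff.mpr hM
  rw [← hsymm, toEuclideanLin_sortedEigenbasis, inner_smul_left, Complex.conj_ofReal]

lemma quadForm_eq_sum {n : ℕ} {M : Matrix (Fin n) (Fin n) ℂ} (hM : M.IsHermitian)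
    (x : EuclideanSpace ℂ (Fin n)) :
    quadForm M x =
      ∑ k, sortedEigenvalues hM k * ‖inner ℂ (sortedEigenbasis hM k) x‖ ^ 2 := by
  rw [quadForm, ← (sortedEigenbasis hM).sum_inner_mul_inner, Complex.re_sum]
  refine Finset.sum_congr rfl fun k _ => ?_
  rw [inner_sortedEigenbasis_toEuclideanLin, mul_left_comm, Complex.re_ofReal_mul,
    ← inner_conj_symm x, ← Complex.normSq_eq_conj_mul_self, Complex.ofReal_re,
    Complex.normSq_eq_norm_sq]

/-- The span of the eigenvectors of `M` with index in `S`. -/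
noncomputable def eigenSpan {n : ℕ} {M : Matrix (Fin n) (Fin n) ℂ} (hM : M.IsHermitian)
    (S : Finset (Fin n)) : Submodule ℂ (EuclideanSpace ℂ (Fin n)) :=
  Submodule.span ℂ (Set.range fun k : S => sortedEigenbasis hM k)

lemma finrank_eigenSpan {n : ℕ} {M : Matrix (Fin n) (Fin n) ℂ} (hM : M.IsHermitian)
    (S : Finset (Fin n)) : Module.finrank ℂ (eigenSpan hM S) = S.card := by
  have h := (sortedEigenbasis hM).orthonormal.linearIndependent.comp
    (Subtype.val : S → Fin n) Subtype.val_injective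
  exact (finrank_span_eq_card h).trans (Fintype.card_coe S)

lemma inner_eq_zero_of_mem_eigenSpan {n : ℕ} {M : Matrix (Fin n) (Fin n) ℂ}
    (hM : M.IsHermitian) {S : Finset (Fin n)} {x : EuclideanSpace ℂ (Fin n)}
    (hx : x ∈ eigenSpan hM S) {k : Fin n} (hk : k ∉ S) :
    inner ℂ (sortedEigenbasis hM k) x = 0 := by
  have hle : eigenSpan hM S ≤ LinearMap.ker (innerₛₗ ℂ (sortedEigenbasis hM k)) := by
    refine Submodule.span_le.mpr ?_
    rintro _ ⟨l, rfl⟩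
    have hkl : k ≠ l := fun h => hk (h ▸ l.2)
    simpa using (sortedEigenbasis hM).orthonormal.2 hkl
  simpa using hle hx

lemma exists_submodule_le_quadForm {n : ℕ} {M : Matrix (Fin n) (Fin n) ℂ}
    (hM : M.IsHermitian) (k : Fin n) :
    ∃ W : Submodule ℂ (EuclideanSpace ℂ (Fin n)), Module.finrank ℂ W = n - k ∧
      ∀ x ∈ W, sortedEigenvalues hM k * ‖x‖ ^ 2 ≤ quadForm M x := by
  refine ⟨eigenSpan hM (Finset.Ici k), by rw [finrank_eigenSpan, Fin.card_Ici], fun x hx => ?_⟩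
  rw [quadForm_eq_sum hM, ← (sortedEigenbasis hM).sum_sq_norm_inner_right, Finset.mul_sum]
  refine Finset.sum_le_sum fun l _ => ?_
  by_cases hl : l ∈ Finset.Ici k
  · exact mul_le_mul_of_nonneg_right
      (sortedEigenvalues_monotone hM (Finset.mem_Ici.mp hl)) (sq_nonneg _)
  · simp [inner_eq_zero_of_mem_eigenSpan hM hx hl]

lemma exists_submodule_quadForm_le {n : ℕ} {M : Matrix (Fin n) (Fin n) ℂ}
    (hM : M.IsHermitian) (k : Fin n) :
    ∃ W : Submodule ℂ (EuclideanSpace ℂ (Fin n)), Module.finrank ℂ W = k + 1 ∧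
      ∀ x ∈ W, quadForm M x ≤ sortedEigenvalues hM k * ‖x‖ ^ 2 := by
  refine ⟨eigenSpan hM (Finset.Iic k), by rw [finrank_eigenSpan, Fin.card_Iic], fun x hx => ?_⟩
  rw [quadForm_eq_sum hM, ← (sortedEigenbasis hM).sum_sq_norm_inner_right, Finset.mul_sum]
  refine Finset.sum_le_sum fun l _ => ?_
  by_cases hl : l ∈ Finset.Iic k
  · exact mul_le_mul_of_nonneg_right
      (sortedEigenvalues_monotone hM (Finset.mem_Iic.mp hl)) (sq_nonneg _)
  · simp [inner_eq_zero_of_mem_eigenSpan hM hx hl]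

lemma exists_common_ne_zero {n : ℕ} (U V W : Submodule ℂ (EuclideanSpace ℂ (Fin n)))
    (h : 2 * n < Module.finrank ℂ U + Module.finrank ℂ V + Module.finrank ℂ W) :
    ∃ x, x ∈ U ∧ x ∈ V ∧ x ∈ W ∧ 0 < ‖x‖ ^ 2 := by
  have h₁ := Submodule.finrank_sup_add_finrank_inf_eq U V
  have h₂ := Submodule.finrank_sup_add_finrank_inf_eq (U ⊓ V) W
  have h₃ := Submodule.finrank_le (U ⊔ V)
  have h₄ := Submodule.finrank_le (U ⊓ V ⊔ W)
  rw [finrank_euclideanSpace_fin] at h₃ h₄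
  have hne : U ⊓ V ⊓ W ≠ ⊥ := Submodule.one_le_finrank_iff.mp (by omega)
  obtain ⟨x, ⟨⟨hU, hV⟩, hW⟩, hx⟩ := Submodule.exists_mem_ne_zero_of_ne_bot hne
  exact ⟨x, hU, hV, hW, pow_pos (norm_pos_iff.mpr hx) 2⟩

/-- **Weyl's inequality.** For Hermitian matrices `A`, `B` with eigenvalues listed in
increasing order `μ_1 ≤ … ≤ μ_n` (here `0`-indexed), one has
`μ_{i+j-1}(A+B) ≥ μ_i (A) + μ_j (B)` whenever `i + j - 1 ≤ n`, and
`μ_i (A) + μ_j (B) ≥ μ_{i+j-n}(A+B)` whenever `i + j - n ≥ 1` (`1`-based indexing). -/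
theorem weyl_inequality {n : ℕ} (A B : Matrix (Fin n) (Fin n) ℂ)
    (hA : A.IsHermitian) (hB : B.IsHermitian) (i j : Fin n) :
    (∀ h : (i : ℕ) + (j : ℕ) < n,
      sortedEigenvalues hA i + sortedEigenvalues hB j ≤
        sortedEigenvalues (hA.add hB) ⟨(i : ℕ) + (j : ℕ), h⟩) ∧
    (∀ _ : n ≤ (i : ℕ) + (j : ℕ) + 1,
      sortedEigenvalues (hA.add hB)
          ⟨(i : ℕ) + (j : ℕ) + 1 - n, by have := i.isLt; have := j.isLt; omega⟩ ≤
        sortedEigenvalues hA i + sortedEigenvalues hB j) := by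
  constructor
  · intro h
    obtain ⟨U, hU, hUq⟩ := exists_submodule_le_quadForm hA i
    obtain ⟨V, hV, hVq⟩ := exists_submodule_le_quadForm hB j
    obtain ⟨W, hW, hWq⟩ := exists_submodule_quadForm_le (hA.add hB) ⟨(i : ℕ) + (j : ℕ), h⟩
    obtain ⟨x, hxU, hxV, hxW, hx⟩ := exists_common_ne_zero U V W (by
      simp only [hU, hV, hW]; omega)
    refine le_of_mul_le_mul_right ?_ hx
    linarith [hUq x hxU, hVq x hxV, hWq x hxW, quadForm_add A B x]
  · intro h
    obtain ⟨U, hU, hUq⟩ := exists_submodule_quadForm_le hA i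
    obtain ⟨V, hV, hVq⟩ := exists_submodule_quadForm_le hB j
    obtain ⟨W, hW, hWq⟩ := exists_submodule_le_quadForm (hA.add hB)
      ⟨(i : ℕ) + (j : ℕ) + 1 - n, by omega⟩
    obtain ⟨x, hxU, hxV, hxW, hx⟩ := exists_common_ne_zero U V W (by
      simp only [hU, hV, hW]; omega)
    refine le_of_mul_le_mul_right ?_ hx
    linarith [hUq x hxU, hVq x hxV, hWq x hxW, quadForm_add A B x]
end

section
/- Define A^{+1}(λ) = [[0,−λ],[0,0]], A^{0}(λ) = [[1/√2, 0],[0, −λ/√2]], A^{−1}(λ) = [[0,0],[λ,0]], and in the two-qutrit space ℂ³⊗ℂ³ (with basis labels +1, 0, −1) the unnormalized vectors ψ₁(λ) = |+1,+1⟩, ψ₂(λ) = |+1,0⟩ + λ|0,+1⟩, ψ₃(λ) = |+1,−1⟩ + 2λ²|0,0⟩ + λ²|−1,+1⟩, ψ₄(λ) = |0,−1⟩ + λ|−1,0⟩, ψ₅(λ) = |−1,−1⟩. Then for every λ ∈ ℝ, every k ∈ {1,…,5}, and every 2×2 complex matrix X, the vector v_X := Σ_{σ,σ' ∈ {+1,0,−1}}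 Tr(X A^{σ}(λ) A^{σ'}(λ)) |σ,σ'⟩ is orthogonal to ψ_k(λ): ⟨ψ_k(λ), v_X⟩ = 0. -/
/-!
Since `v_X` is linear in `X`, orthogonality to `ψ_k` for all `X` amounts to the matrix identity
`∑ conj (ψ_k (σ, σ')) • A^σ A^{σ'} = 0`. For the five vectors these identities read
`A⁺A⁺ = 0`, `A⁺A⁰ + λ A⁰A⁺ = 0`, `A⁺A⁻ + 2λ² A⁰A⁰ + λ² A⁻A⁺ = 0`, `A⁰A⁻ + λ A⁻A⁰ = 0` and
`A⁻A⁻ = 0`. Each is a computation with `2 × 2` matrices; the value of `√2` matters only in the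
third, through `(√2)⁻¹ ^ 2 = 1 / 2`. The coefficients of `ψ_k` are real, so conjugation does nothing.
-/

/-- The interpolating AKLT MPS tensors of Eq. (7) of the paper, with physical labels
`0 ↦ +1`, `1 ↦ 0`, `2 ↦ -1`. -/
noncomputable def akltTensor (l : ℝ) : Fin 3 → Matrix (Fin 2) (Fin 2) ℂ :=
  ![!![0, -(l : ℂ); 0, 0],
    !![((Real.sqrt 2 : ℝ) : ℂ)⁻¹, 0; 0, -(l : ℂ) / ((Real.sqrt 2 : ℝ) : ℂ)],
    !![0, 0; (l : ℂ), 0]]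

/-- The (unnormalized) kernel-basis vectors `ψ₁,…,ψ₅` in the two-qutrit space, with basis
labels `0 ↦ +1`, `1 ↦ 0`, `2 ↦ -1`:
`ψ₁ = |+1,+1⟩`, `ψ₂ = |+1,0⟩ + λ|0,+1⟩`, `ψ₃ = |+1,-1⟩ + 2λ²|0,0⟩ + λ²|-1,+1⟩`,
`ψ₄ = |0,-1⟩ + λ|-1,0⟩`, `ψ₅ = |-1,-1⟩`. -/
noncomputable def akltKernelVec (l : ℝ) : Fin 5 → Fin 3 × Fin 3 → ℂ :=
  ![fun p => if p = (0, 0) then 1 else 0,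
    fun p => if p = (0, 1) then 1 else if p = (1, 0) then (l : ℂ) else 0,
    fun p => if p = (0, 2) then 1 else if p = (1, 1) then 2 * (l : ℂ) ^ 2
             else if p = (2, 0) then (l : ℂ) ^ 2 else 0,
    fun p => if p = (1, 2) then 1 else if p = (2, 1) then (l : ℂ) else 0,
    fun p => if p = (2, 2) then 1 else 0]

/-- The matrix annihilation relations equivalent to the orthogonality of `ψ_k` to the whole
image of the two-site map. -/
lemma akltTensor_relation (l : ℝ) (k : Fin 5) :
    ∑ p : Fin 3 × Fin 3,
      (starRingEnd ℂ) (akltKernelVec l k p) • (akltTensor l p.1 * akltTensor l p.2) = 0 := by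
  have hs : (((Real.sqrt 2 : ℝ) : ℂ)⁻¹) ^ 2 = 1 / 2 := by
    rw [inv_pow, ← Complex.ofReal_pow, Real.sq_sqrt (by norm_num)]
    norm_num
  have h2 : (starRingEnd ℂ) 2 = 2 := map_ofNat _ 2
  simp only [akltTensor, div_eq_mul_inv]
  -- From here on only `s ^ 2 = 1 / 2` is known about `s = (√2)⁻¹`; the entries are polynomials.
  generalize ((Real.sqrt 2 : ℝ) : ℂ)⁻¹ = s at hs
  ext i j
  fin_cases k <;> fin_cases i <;> fin_cases j <;>
    simp [akltKernelVec, h2, Fintype.sum_prod_type, Fin.sum_univ_three,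
      Matrix.mul_apply] <;>
    grind

/-- Each kernel vector `ψ_k(λ)` is orthogonal to every vector
`v_X = Σ_{σ,σ'} Tr(X A^σ(λ) A^{σ'}(λ)) |σ,σ'⟩` in the image of the two-site (blocked)
injective map of the AKLT MPS tensors. -/
theorem aklt_kernel_orthogonal (l : ℝ) (k : Fin 5) (X : Matrix (Fin 2) (Fin 2) ℂ) :
    ∑ p : Fin 3 × Fin 3,
      (starRingEnd ℂ) (akltKernelVec l k p) *
        (X * akltTensor l p.1 * akltTensor l p.2).trace = 0 := by
  have h := congrArg (fun M => (X * M).trace) (akltTensor_relation l k)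
  simpa [Matrix.mul_sum, Matrix.trace_sum, Matrix.mul_assoc] using h
end

section
/- For λ ∈ ℝ define the four unit vectors in (ℂ²)^{⊗3}: φ₁(λ) = (λ|000⟩ − |010⟩)/√(λ²+1), φ₂(λ) = (|001⟩ − |011⟩)/√2, φ₃(λ) = (−|100⟩ + |110⟩)/√2, φ₄(λ) = (−|101⟩ + λ|111⟩)/√(λ²+1). Then (1/4) Σ_{k=1}^{4} φ_k(λ) φ_k(λ)^† = (1/8)·𝟙₈ − ((1+λ)²/(16(1+λ²)))·(𝟙⊗σ_x⊗𝟙) − ((1−λ²)/(16(1+λ²)))·(σ_z⊗σ_z⊗𝟙 + 𝟙⊗σ_z⊗σ_z) + ((1−λ)²/(16(1+λ²)))·(σ_z⊗σ_x⊗σ_z). -/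
/-!
Every operator in the identity is block diagonal with respect to the first and third tensor
factors. On the block where these factors are `|a⟩` and `|c⟩`, the left side is one rank-one
`2 × 2` matrix, and the right side is a combination of `𝟙`, `σ_x` and `σ_z` with coefficients
depending on the signs `(-1)^a`, `(-1)^c`. Comparing entries leaves rational identities in `λ`,
once the square-root normalizations are squared by `inv_sqrt_mul_inv_sqrt`.
-/

open scoped Kronecker

def pauliX : Matrix (Fin 2) (Fin 2) ℂ := !![0, 1; 1, 0]

def pauliZ : Matrix (Fin 2) (Fin 2) ℂ := !![1, 0; 0, -1]

/-- The normalized kernel-basis vectors `φ₁(λ),…,φ₄(λ)` of the three-site blocked MPS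
interpolating between the cluster state and a product state through the GHZ state:
`φ₁ = (λ|000⟩ - |010⟩)/√(λ²+1)`, `φ₂ = (|001⟩ - |011⟩)/√2`,
`φ₃ = (-|100⟩ + |110⟩)/√2`, `φ₄ = (-|101⟩ + λ|111⟩)/√(λ²+1)`. -/
noncomputable def ghzKernelVec (l : ℝ) : Fin 4 → Fin 2 × Fin 2 × Fin 2 → ℂ :=
  ![fun p => if p = (0, 0, 0) then (l : ℂ) * ((Real.sqrt (l ^ 2 + 1) : ℝ) : ℂ)⁻¹
             else if p = (0, 1, 0) then -((Real.sqrt (l ^ 2 + 1) : ℝ) : ℂ)⁻¹ else 0,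
    fun p => if p = (0, 0, 1) then ((Real.sqrt 2 : ℝ) : ℂ)⁻¹
             else if p = (0, 1, 1) then -((Real.sqrt 2 : ℝ) : ℂ)⁻¹ else 0,
    fun p => if p = (1, 0, 0) then -((Real.sqrt 2 : ℝ) : ℂ)⁻¹
             else if p = (1, 1, 0) then ((Real.sqrt 2 : ℝ) : ℂ)⁻¹ else 0,
    fun p => if p = (1, 0, 1) then -((Real.sqrt (l ^ 2 + 1) : ℝ) : ℂ)⁻¹
             else if p = (1, 1, 1) then (l : ℂ) * ((Real.sqrt (l ^ 2 + 1) : ℝ) : ℂ)⁻¹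
             else 0]

theorem inv_sqrt_mul_inv_sqrt (x : ℝ) (hx : 0 ≤ x) :
    ((Real.sqrt x : ℝ) : ℂ)⁻¹ * ((Real.sqrt x : ℝ) : ℂ)⁻¹ = (x : ℂ)⁻¹ := by
  rw [← mul_inv, ← Complex.ofReal_mul, Real.mul_self_sqrt hx]

/-- The canonical (`S = 𝟙/4`) parent-Hamiltonian local term of the
cluster-to-product-state interpolation equals a combination of transverse-field Ising
and cluster-state interactions. -/
theorem ghz_local_term_eq_ising_cluster (l : ℝ) :
    (1 / 4 : ℂ) • ∑ k : Fin 4, Matrix.vecMulVec (ghzKernelVec l k) (star (ghzKernelVec l k)) =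
      (1 / 8 : ℂ) • (1 : Matrix (Fin 2 × Fin 2 × Fin 2) (Fin 2 × Fin 2 × Fin 2) ℂ)
        - (((1 + l) ^ 2 / (16 * (1 + l ^ 2)) : ℝ) : ℂ) •
            ((1 : Matrix (Fin 2) (Fin 2) ℂ) ⊗ₖ (pauliX ⊗ₖ (1 : Matrix (Fin 2) (Fin 2) ℂ)))
        - (((1 - l ^ 2) / (16 * (1 + l ^ 2)) : ℝ) : ℂ) •
            (pauliZ ⊗ₖ (pauliZ ⊗ₖ (1 : Matrix (Fin 2) (Fin 2) ℂ)) +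
              (1 : Matrix (Fin 2) (Fin 2) ℂ) ⊗ₖ (pauliZ ⊗ₖ pauliZ))
        + (((1 - l) ^ 2 / (16 * (1 + l ^ 2)) : ℝ) : ℂ) • (pauliZ ⊗ₖ (pauliX ⊗ₖ pauliZ)) := by
  have hs := inv_sqrt_mul_inv_sqrt (l ^ 2 + 1) (by positivity)
  have ht := inv_sqrt_mul_inv_sqrt 2 (by norm_num)
  have hN : (1 + (l : ℂ) ^ 2) ≠ 0 := by
    have h : (1 + l ^ 2 : ℝ) ≠ 0 := by positivity
    exact_mod_cast h
  have hs' : ((Real.sqrt (l ^ 2 + 1) : ℝ) : ℂ)⁻¹ ^ 2 * (1 + (l : ℂ) ^ 2) = 1 := by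
    rw [sq, hs]
    push_cast
    rw [add_comm (1 : ℂ)] at hN ⊢
    exact inv_mul_cancel₀ hN
  have ht' : ((Real.sqrt 2 : ℝ) : ℂ)⁻¹ ^ 2 * 2 = 1 := by
    rw [sq, ht]
    norm_num
  -- The inverse square roots become variables, so that clearing the denominator `1 + λ²`
  -- leaves polynomial goals.
  generalize hsg : ((Real.sqrt (l ^ 2 + 1) : ℝ) : ℂ)⁻¹ = s at hs'
  generalize htg : ((Real.sqrt 2 : ℝ) : ℂ)⁻¹ = t at ht'
  have hsc : (starRingEnd ℂ) s = s := by rw [← hsg, map_inv₀, Complex.conj_ofReal]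
  have htc : (starRingEnd ℂ) t = t := by rw [← htg, map_inv₀, Complex.conj_ofReal]
  ext ⟨a, b, c⟩ ⟨a', b', c'⟩
  fin_cases a <;> fin_cases b <;> fin_cases c <;> fin_cases a' <;> fin_cases b' <;>
    fin_cases c' <;>
    simp [Fin.sum_univ_four, ghzKernelVec, hsg, htg, hsc, htc, Matrix.vecMulVec_apply,
      Matrix.kroneckerMap_apply, pauliX, pauliZ, -Complex.ofReal_inv] <;>
    field_simp <;> grind
end
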